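/- Fix δ with 0 < δ < 1/4. There exist a constant c > 0 and N ∈ ℕ such that for all n ≥ N, P_n({λ ∈ D_n : sup_{t ≥ 0} |(1/√n)·Σ_{k ≤ t√n} X_k(λ) − L(t)| > n^{−1/4+δ}}) ≤ exp(−c·n^{δ}). (In particular the limsup as n → ∞ of n^{−δ}·log of this probability is negative.) -/

import Mathlib

/-!
Write `β = 1 / (A √n)` and let every `k ≤ n` be a part independently with odds `e^{-βk} : 1`.
Conditioned on the sum of the parts being `n`, this is the uniform measure on distinct parts
partitions of `n`.  So a probability under the uniform measure is at most the probability under the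
independent model times `e^{βn} ∏ (1 + e^{-βk}) / d(n)`.

*The cost of conditioning is polynomial.*  By Euler's product,
`log ∏ (1 + e^{-βk}) ≤ ∑_m (1/m) ∑_{j odd} e^{-βjm} = ∑_m 1 / (2 m sinh (βm)) ≤ π² / (12 β)`
(`prod_one_add_exp_le`), which makes the numerator at most `e^{2√n/A} = e^{π√(n/3)}`.  For the
denominator, `distincts_lower` gives `d(n) ≥ c n^{-K} e^{2√n/A}` by Erdős' elementary method:
the recurrence `n d(n) ≥ ∑_{j odd, m} j d(n - jm)` (`distincts_rec`) is fed with the bound for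
smaller arguments.  The main term is `∑ j e^{-βjm} = n - O(√n)`; expanding `√(n - k)` to second
order loses another `O(√n)`, and the factor `(n - k)^{-K} ≥ n^{-K} e^{Kk/n}` gains `K` times a
constant times `√n`, which wins once `K` is large (`lower_step`).

*Concentration.*  In the independent model the number of parts `≤ M` has mean
`mu β M = ∑_{k ≤ M} 1 / (1 + e^{βk})` and variance at most `1/β = A √n`; an exponential moment with
parameter `θ = n^{-1/4}` (`centred_moment_le`) bounds deviations of size `n^{1/4+δ}` by
`O(exp (-n^δ))`.  A union bound over `M ≤ n` costs a further factor `n` (`card_deviation_le`).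

*The limit shape.*  `√n L(M/√n)` is the integral over `[0, M]` of the function whose sum is
`mu β M`, so the two differ by at most `1/2`, and passing from integers `M ≤ n` to real `t ≥ 0`
costs `O(1)` (`mu_L_close`).
-/

open scoped BigOperators Real
open Filter

/-- The uniform probability (as a real number) that a distinct parts partition of `n`
satisfies the predicate `p`. -/
noncomputable def Pn (n : ℕ) (p : Nat.Partition n → Prop) : ℝ :=
  letI := Classical.decPred p
  (((Nat.Partition.distincts n).filter p).card : ℝ) / ((Nat.Partition.distincts n).card : ℝ)

/-- `X k lam` is the multiplicity of the part `k` in the partition `lam`. -/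
def X {n : ℕ} (lam : Nat.Partition n) (k : ℕ) : ℕ := Multiset.count k lam.parts

/-- The constant `A = √12/π`. -/
noncomputable def A : ℝ := Real.sqrt 12 / π

/-- The limit shape `L(t) = A log(2/(1+e^{−t/A}))` of distinct parts partitions. -/
noncomputable def L (t : ℝ) : ℝ := A * Real.log (2 / (1 + Real.exp (-t / A)))

/-! ### The recurrence for the number of partitions -/

/-- Adjoining `m` copies of the odd number `j` embeds the odd-parts partitions of `n - j * m` into
those odd-parts partitions of `n` in which `j` occurs at least `m` times. -/
lemma card_odds_sub_le (n m j : ℕ) (hj : Odd j) (h : j * m ≤ n) :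
    (Nat.Partition.odds (n - j * m)).card ≤
      ((Nat.Partition.odds n).filter (fun p => m ≤ p.parts.count j)).card := by
  classical
  refine Finset.card_le_card_of_injOn
    (fun p => (⟨p.parts + Multiset.replicate m j, ?_, ?_⟩ : Nat.Partition n)) ?_ ?_
  · intro i hi
    rcases Multiset.mem_add.1 hi with hi | hi
    · exact p.parts_pos hi
    · rw [Multiset.eq_of_mem_replicate hi]; exact hj.pos
  · rw [Multiset.sum_add, p.parts_sum, Multiset.sum_replicate, smul_eq_mul, mul_comm m j]
    omega
  · intro p hp
    simp only [Nat.Partition.odds, Nat.Partition.restricted, Finset.coe_filter, Finset.mem_filter,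
      Finset.mem_univ, true_and, Set.mem_ofPred_eq] at hp ⊢
    refine ⟨fun i hi => ?_, ?_⟩
    · rcases Multiset.mem_add.1 hi with hi | hi
      · exact hp i hi
      · rw [Multiset.eq_of_mem_replicate hi]; exact Nat.not_even_iff_odd.2 hj
    · simp [Multiset.count_add, Multiset.count_replicate_self]
  · intro p _ q _ hpq
    have := congrArg Nat.Partition.parts hpq
    exact Nat.Partition.ext (by simpa using this)

lemma sum_mul_count_le {n : ℕ} (p : Nat.Partition n) (I : ℕ) :
    ∑ i ∈ Finset.range I, (2 * i + 1) * p.parts.count (2 * i + 1) ≤ n := by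
  classical
  have h1 := Finset.sum_multiset_count p.parts
  rw [p.parts_sum] at h1
  have h2 : ∑ i ∈ Finset.range I, (2 * i + 1) * p.parts.count (2 * i + 1)
      = ∑ k ∈ (Finset.range I).image (fun i => 2 * i + 1), p.parts.count k • k := by
    rw [Finset.sum_image (fun a _ b _ h => by simpa using h)]
    exact Finset.sum_congr rfl fun i _ => by rw [smul_eq_mul, mul_comm]
  rw [h2]
  conv_rhs => rw [h1]
  refine Finset.sum_le_sum_of_ne_zero fun k _ hk => ?_
  rw [Multiset.mem_toFinset]
  by_contra hc
  simp [Multiset.count_eq_zero_of_notMem hc] at hk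

/-- Half of Euler's identity `n d(n) = ∑_{j odd, m ≥ 1} j d(n - j m)`, over a finite box
of pairs `(j, m)` with `j m < n`.  It comes from counting `n = ∑ j · (multiplicity of j)` over all partitions
of `n` into odd parts, which are as many as the distinct parts partitions. -/
lemma distincts_rec (n M I : ℕ) :
    ∑ m ∈ Finset.Icc 1 M, ∑ i ∈ Finset.range I,
      (if (2 * i + 1) * m < n then
        (2 * i + 1) * (Nat.Partition.distincts (n - (2 * i + 1) * m)).card else 0)
      ≤ n * (Nat.Partition.distincts n).card := by
  classical
  simp only [← Nat.Partition.card_odds_eq_card_distincts]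
  calc _ ≤ ∑ m ∈ Finset.Icc 1 M, ∑ i ∈ Finset.range I, ∑ p ∈ Nat.Partition.odds n,
        (if m ≤ p.parts.count (2 * i + 1) then (2 * i + 1) else 0) := by
        refine Finset.sum_le_sum fun m _ => Finset.sum_le_sum fun i _ => ?_
        split_ifs with h
        · have := card_odds_sub_le n m (2 * i + 1) ⟨i, rfl⟩ h.le
          rw [← Finset.sum_filter, Finset.sum_const, smul_eq_mul, mul_comm (2 * i + 1)]
          exact Nat.mul_le_mul_right _ this
        · exact Nat.zero_le _
    _ = ∑ p ∈ Nat.Partition.odds n, ∑ i ∈ Finset.range I, ∑ m ∈ Finset.Icc 1 M,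
        (if m ≤ p.parts.count (2 * i + 1) then (2 * i + 1) else 0) := by
        rw [Finset.sum_comm, Finset.sum_comm (s := Nat.Partition.odds n)]
        exact Finset.sum_congr rfl fun i _ => Finset.sum_comm
    _ ≤ ∑ p ∈ Nat.Partition.odds n, n := by
        refine Finset.sum_le_sum fun p _ => le_trans (Finset.sum_le_sum fun i _ => ?_)
          (sum_mul_count_le p I)
        rw [← Finset.sum_filter, Finset.sum_const, smul_eq_mul, mul_comm]
        refine Nat.mul_le_mul_left _ ?_
        calc _ ≤ (Finset.Icc 1 (p.parts.count (2 * i + 1))).card :=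
              Finset.card_le_card fun m hm => by
                simp only [Finset.mem_filter, Finset.mem_Icc] at hm ⊢
                exact ⟨hm.1.1, hm.2⟩
          _ = _ := by simp
    _ = _ := by simp [mul_comm]

lemma distincts_card_pos (n : ℕ) : 1 ≤ (Nat.Partition.distincts n).card := by
  classical
  rw [Nat.succ_le_iff, Finset.card_pos]
  refine ⟨Nat.Partition.indiscrete n, ?_⟩
  simp only [Nat.Partition.distincts, Finset.mem_filter, Finset.mem_univ, true_and]
  rcases eq_or_ne n 0 with rfl | h
  · simp
  · simp [Nat.Partition.indiscrete_parts h]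

/-! ### Hyperbolic sums -/

lemma A_pos : 0 < A := by unfold A; positivity

lemma A_sq : A ^ 2 = 12 / π ^ 2 := by
  unfold A; rw [div_pow, Real.sq_sqrt (by norm_num)]

lemma sinh_le_mul_cosh {y : ℝ} (hy : 0 ≤ y) : Real.sinh y ≤ y * Real.cosh y := by
  have hd : ∀ x : ℝ, HasDerivAt (fun y => y * Real.cosh y - Real.sinh y) (x * Real.sinh x) x := by
    intro x
    have := ((hasDerivAt_id x).mul (Real.hasDerivAt_cosh x)).sub (Real.hasDerivAt_sinh x)
    convert! this using 1
    simp only [id]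
    ring
  have hm : MonotoneOn (fun y => y * Real.cosh y - Real.sinh y) (Set.Ici 0) := by
    refine monotoneOn_of_deriv_nonneg (convex_Ici 0)
      (fun x _ => (hd x).continuousAt.continuousWithinAt)
      (fun x _ => (hd x).differentiableAt.differentiableWithinAt) fun x hx => ?_
    rw [interior_Ici] at hx
    rw [(hd x).deriv]
    exact mul_nonneg hx.le (Real.sinh_nonneg_iff.2 hx.le)
  have := hm (Set.mem_Ici.2 le_rfl) (Set.mem_Ici.2 hy) hy
  simp at this
  linarith

lemma hasSum_exp_odd {y : ℝ} (hy : 0 < y) :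
    HasSum (fun i : ℕ => Real.exp (-(2 * i + 1) * y)) (1 / (2 * Real.sinh y)) := by
  have h1 : Real.exp (-(2 * y)) < 1 := by rw [Real.exp_lt_one_iff]; linarith
  have := (hasSum_geometric_of_lt_one (Real.exp_pos _).le h1).mul_left (Real.exp (-y))
  have hs : Real.exp (-y) * (1 - Real.exp (-(2 * y)))⁻¹ = 1 / (2 * Real.sinh y) := by
    rw [Real.sinh_eq]
    have e1 : Real.exp (-(2 * y)) = Real.exp (-y) * Real.exp (-y) := by
      rw [← Real.exp_add]; ring_nf
    have e2 : Real.exp y = (Real.exp (-y))⁻¹ := by rw [Real.exp_neg, inv_inv]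
    rw [e1] at h1
    rw [e1, e2]
    have := Real.exp_pos (-y)
    have h3 : 1 - Real.exp (-y) * Real.exp (-y) ≠ 0 := by linarith
    rw [← pow_two] at h3
    field_simp
  rw [hs] at this
  convert! this using 1
  funext i
  rw [← Real.exp_nat_mul, ← Real.exp_add]
  ring_nf

lemma hasSum_mul_exp_odd {y : ℝ} (hy : 0 < y) :
    HasSum (fun i : ℕ => (2 * i + 1) * Real.exp (-(2 * i + 1) * y))
      (Real.cosh y / (2 * Real.sinh y ^ 2)) := by
  have h1 : Real.exp (-(2 * y)) < 1 := by rw [Real.exp_lt_one_iff]; linarith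
  have h0 := Real.exp_pos (-(2 * y))
  have ha := (hasSum_coe_mul_geometric_of_norm_lt_one (𝕜 := ℝ) (r := Real.exp (-(2 * y)))
    (by rw [Real.norm_eq_abs, abs_of_pos h0]; exact h1)).mul_left (2 * Real.exp (-y))
  have := ha.add ((hasSum_geometric_of_lt_one h0.le h1).mul_left (Real.exp (-y)))
  convert! this using 1
  · funext i
    rw [← Real.exp_nat_mul]
    have : Real.exp (-(2 * i + 1) * y) = Real.exp (-y) * Real.exp (i * -(2 * y)) := by
      rw [← Real.exp_add]; ring_nf
    rw [this]; ring
  · rw [Real.sinh_eq, Real.cosh_eq]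
    have e1 : Real.exp (-(2 * y)) = Real.exp (-y) * Real.exp (-y) := by
      rw [← Real.exp_add]; ring_nf
    have e2 : Real.exp y = (Real.exp (-y))⁻¹ := by rw [Real.exp_neg, inv_inv]
    rw [e1] at h1
    rw [e1, e2]
    have := Real.exp_pos (-y)
    generalize Real.exp (-y) = x at *
    have h3 : 1 - x ^ 2 ≠ 0 := by nlinarith
    have h4 : x⁻¹ - x = (1 - x ^ 2) / x := by field_simp
    have h5 : 1 - x * x = 1 - x ^ 2 := by ring
    rw [h4, h5]
    field_simp
    ring

/-- `∑_{j odd} j e^{-jy} = cosh y / (2 sinh² y)` is at least its leading term `1/(2y²)`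
up to a bounded error. -/
lemma cosh_div_sinh_ge {y : ℝ} (hy : 0 < y) :
    1 / (2 * y ^ 2) - 1 ≤ Real.cosh y / (2 * Real.sinh y ^ 2) := by
  have hs : 0 < Real.sinh y := Real.sinh_pos_iff.2 hy
  have hc : 1 ≤ Real.cosh y := Real.one_le_cosh y
  have h := sinh_le_mul_cosh hy.le
  have h2 : Real.sinh y ^ 2 ≤ y ^ 2 * (1 + Real.sinh y ^ 2) := by
    have e : 1 + Real.sinh y ^ 2 = Real.cosh y ^ 2 := by rw [Real.cosh_sq]; ring
    rw [e, ← mul_pow]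
    gcongr
  rw [sub_le_iff_le_add, div_add_one (by positivity), div_le_div_iff₀ (by positivity) (by positivity)]
  have : 0 < y ^ 2 := by positivity
  have : 0 ≤ y ^ 2 * (Real.cosh y - 1) := mul_nonneg this.le (by linarith)
  have : 0 ≤ y ^ 2 * Real.sinh y ^ 2 := by positivity
  nlinarith

lemma one_div_sinh_le {y : ℝ} (hy : 0 < y) : 1 / (2 * Real.sinh y) ≤ 1 / (2 * y) := by
  have := Real.self_le_sinh_iff.2 hy.le
  gcongr

lemma cube_mul_exp_le {y : ℝ} (hy : 0 < y) (j : ℝ) (hj : 0 ≤ j) :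
    j ^ 3 * Real.exp (-j * y) ≤ 48 / y ^ 3 * Real.exp (-j * (y / 2)) := by
  have h := Real.pow_div_factorial_le_exp (j * (y / 2)) (by positivity) 3
  have e : Real.exp (-j * (y / 2)) = Real.exp (j * (y / 2)) * Real.exp (-j * y) := by
    rw [← Real.exp_add]; ring_nf
  rw [e, ← mul_assoc]
  refine mul_le_mul_of_nonneg_right ?_ (Real.exp_pos _).le
  calc j ^ 3 = 48 / y ^ 3 * ((j * (y / 2)) ^ 3 / (Nat.factorial 3 : ℕ)) := by
        have : ((Nat.factorial 3 : ℕ) : ℝ) = 6 := by norm_num [Nat.factorial]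
        rw [this]; field_simp; ring
    _ ≤ _ := by gcongr

lemma sum_inv_sq_le (M : ℕ) : ∑ m ∈ Finset.Icc 1 M, 1 / (m : ℝ) ^ 2 ≤ 2 / A ^ 2 := by
  have := sum_le_hasSum (Finset.Icc 1 M) (fun i _ => by positivity) hasSum_zeta_two
  rw [A_sq]
  refine this.trans (le_of_eq ?_)
  field_simp; norm_num

/-- The tail of `∑ 1/m² = π²/6` beyond `M` is at most `1/M`. -/
lemma sum_inv_sq_ge (M : ℕ) (hM : 1 ≤ M) :
    2 / A ^ 2 - 1 / M ≤ ∑ m ∈ Finset.Icc 1 M, 1 / (m : ℝ) ^ 2 := by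
  have hz := hasSum_zeta_two.tendsto_sum_nat
  have key : ∀ N, M ≤ N → ∑ m ∈ Finset.range (N + 1), 1 / (m : ℝ) ^ 2 ≤
      ∑ m ∈ Finset.Icc 1 M, 1 / (m : ℝ) ^ 2 + 1 / (M : ℝ) - 1 / (N : ℝ) := by
    intro N hN
    induction N, hN using Nat.le_induction with
    | base =>
      rw [Finset.range_eq_Ico, Finset.sum_eq_sum_Ico_succ_bot (by omega),
        Finset.Ico_add_one_right_eq_Icc]
      simp
    | succ N hN ih =>
      rw [Finset.sum_range_succ]
      have hN0 : (0 : ℝ) < N := by exact_mod_cast (by omega : 0 < N)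
      have : 1 / ((N + 1 : ℕ) : ℝ) ^ 2 ≤ 1 / (N : ℝ) - 1 / ((N + 1 : ℕ) : ℝ) := by
        push_cast
        rw [div_sub_div _ _ (by positivity) (by positivity), div_le_div_iff₀ (by positivity)
          (by positivity)]
        nlinarith
      linarith
  have h2 : π ^ 2 / 6 ≤ ∑ m ∈ Finset.Icc 1 M, 1 / (m : ℝ) ^ 2 + 1 / M := by
    refine le_of_tendsto ((tendsto_add_atTop_iff_nat 1).2 hz) ?_
    filter_upwards [eventually_ge_atTop M] with N hN
    have := key N hN
    have : (0 : ℝ) ≤ 1 / N := by positivity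
    linarith
  have e : 2 / A ^ 2 = π ^ 2 / 6 := by rw [A_sq]; field_simp; norm_num
  rw [e]; linarith

/-! ### Lower bound for the number of distinct parts partitions -/

lemma sqrt_sub_ge {s k : ℝ} (hs : 0 < s) (hk : 0 ≤ k) (hks : k ≤ s ^ 2) :
    s - k / (2 * s) - k ^ 2 / (2 * s ^ 3) ≤ √(s ^ 2 - k) := by
  set x := k / s ^ 2 with hx
  have hkx : k = x * s ^ 2 := by rw [hx]; field_simp
  have hx0 : 0 ≤ x := by positivity
  have hx1 : x ≤ 1 := by rw [hx]; exact (div_le_one (by positivity)).2 hks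
  have e : s - k / (2 * s) - k ^ 2 / (2 * s ^ 3) = s * ((1 - x) * (1 + x / 2)) := by
    rw [hkx]; field_simp; ring
  rw [e]
  refine Real.le_sqrt_of_sq_le ?_
  have e2 : s ^ 2 - k = s ^ 2 * (1 - x) := by rw [hkx]; ring
  rw [e2, mul_pow]
  refine mul_le_mul_of_nonneg_left ?_ (by positivity)
  have : (1 - x) * (1 + x / 2) ^ 2 ≤ 1 := by nlinarith [mul_nonneg hx0 (mul_nonneg hx0 hx0)]
  calc ((1 - x) * (1 + x / 2)) ^ 2 = (1 - x) * ((1 - x) * (1 + x / 2) ^ 2) := by ring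
    _ ≤ (1 - x) * 1 := by gcongr
    _ = _ := by ring

/-- The summand of the recurrence, relative to the claimed lower bound at `n = s²`.  The term
`K k / s²` comes from the polynomial factor `n ^ (-K)`. -/
lemma exp_ratio_ge {s k K : ℝ} (hs : 0 < s) (hk : 0 ≤ k) (hks : k < s ^ 2) (hK : 0 ≤ K) :
    Real.exp (2 / A * s - K * Real.log (s ^ 2)) *
        (Real.exp (-(k / (A * s))) * (1 - k ^ 2 / (A * s ^ 3) + K * k / s ^ 2)) ≤
      Real.exp (2 / A * √(s ^ 2 - k) - K * Real.log (s ^ 2 - k)) := by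
  have hA := A_pos
  have h1 := sqrt_sub_ge hs hk hks.le
  have h2 : Real.log (s ^ 2 - k) ≤ Real.log (s ^ 2) - k / s ^ 2 := by
    have hp : 0 < (s ^ 2 - k) / s ^ 2 := div_pos (by linarith) (by positivity)
    have := Real.log_le_sub_one_of_pos hp
    rw [Real.log_div (by linarith) (by positivity), sub_div, div_self (by positivity)] at this
    linarith
  have h3 := Real.add_one_le_exp (- (k ^ 2 / (A * s ^ 3)) + K * k / s ^ 2)
  calc _ ≤ Real.exp (2 / A * s - K * Real.log (s ^ 2)) *
        (Real.exp (-(k / (A * s))) * Real.exp (- (k ^ 2 / (A * s ^ 3)) + K * k / s ^ 2)) := by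
        gcongr; linarith
    _ = Real.exp (2 / A * (s - k / (2 * s) - k ^ 2 / (2 * s ^ 3))
          - K * (Real.log (s ^ 2) - k / s ^ 2)) := by
        rw [← Real.exp_add, ← Real.exp_add]; congr 1; field_simp; ring
    _ ≤ _ := by
        apply Real.exp_le_exp.2
        gcongr

lemma inner_sum_ge {n m : ℕ} {s : ℝ} (hm : 1 ≤ m) (hs : 0 < s) (hsn : s ^ 2 = n) (hsA : A ≤ s) :
    A ^ 2 * s ^ 2 / 2 * (1 / (m : ℝ) ^ 2) - 1 - 48 * A ^ 3 * s * (1 / (m : ℝ) ^ 2) ≤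
    ∑ i ∈ Finset.range n, (if (2 * i + 1) * m < n then
      (2 * i + 1 : ℝ) * (Real.exp (-(((2 * i + 1) * m : ℝ) / (A * s))) *
        (1 - ((2 * i + 1) * m : ℝ) ^ 2 / (A * s ^ 3))) else 0) := by
  have hA := A_pos
  have hm0 : (0 : ℝ) < m := by exact_mod_cast hm
  set y : ℝ := m / (A * s) with hy
  have hy0 : 0 < y := by positivity
  set f : ℕ → ℝ := fun i => (2 * i + 1 : ℝ) * (Real.exp (-(((2 * i + 1) * m : ℝ) / (A * s))) *
        (1 - ((2 * i + 1) * m : ℝ) ^ 2 / (A * s ^ 3))) with hf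
  set g : ℕ → ℝ := fun i => (2 * i + 1 : ℝ) * Real.exp (-(2 * i + 1) * y)
    - (m ^ 2 / (A * s ^ 3) * (48 / y ^ 3)) * Real.exp (-(2 * i + 1) * (y / 2)) with hg
  have hsum : HasSum g (Real.cosh y / (2 * Real.sinh y ^ 2)
      - (m ^ 2 / (A * s ^ 3) * (48 / y ^ 3)) * (1 / (2 * Real.sinh (y / 2)))) :=
    (hasSum_mul_exp_odd hy0).sub ((hasSum_exp_odd (half_pos hy0)).mul_left _)
  have hgf : ∀ i, g i ≤ f i := by
    intro i
    have := cube_mul_exp_le hy0 (2 * i + 1) (by positivity)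
    have e : -(((2 * i + 1) * m : ℝ) / (A * s)) = -(2 * i + 1) * y := by rw [hy]; ring
    have h2 : (m : ℝ) ^ 2 / (A * s ^ 3) * ((2 * i + 1 : ℝ) ^ 3 * Real.exp (-(2 * i + 1) * y)) ≤
      m ^ 2 / (A * s ^ 3) * (48 / y ^ 3 * Real.exp (-(2 * i + 1) * (y / 2))) := by gcongr
    simp only [hf, hg, e]
    calc _ ≤ (2 * i + 1 : ℝ) * Real.exp (-(2 * i + 1) * y) -
        (m : ℝ) ^ 2 / (A * s ^ 3) * ((2 * i + 1 : ℝ) ^ 3 * Real.exp (-(2 * i + 1) * y)) := by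
          linarith
      _ = _ := by ring
  have hneg : ∀ i : ℕ, n ≤ (2 * i + 1) * m → f i ≤ 0 := by
    intro i hi
    have hi' : s ^ 2 ≤ (2 * i + 1) * m := by rw [hsn]; exact_mod_cast hi
    have : 1 ≤ ((2 * i + 1) * m : ℝ) ^ 2 / (A * s ^ 3) := by
      rw [one_le_div (by positivity)]
      calc A * s ^ 3 ≤ s * s ^ 3 := by gcongr
        _ = (s ^ 2) ^ 2 := by ring
        _ ≤ _ := by gcongr
    refine mul_nonpos_of_nonneg_of_nonpos (by positivity)
      (mul_nonpos_of_nonneg_of_nonpos (Real.exp_pos _).le (by linarith))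
  rw [← Finset.sum_filter]
  have h1 := sum_le_hasSum ((Finset.range n).filter (fun i => (2 * i + 1) * m < n))
    (f := fun i => - g i) (fun i hi => by
      have : n ≤ (2 * i + 1) * m := by
        by_contra hc
        push Not at hc
        apply hi
        simp only [Finset.mem_filter, Finset.mem_range]
        refine ⟨?_, hc⟩
        nlinarith
      linarith [hgf i, hneg i this]) hsum.neg
  rw [Finset.sum_neg_distrib] at h1
  have h2 := Finset.sum_le_sum (s := (Finset.range n).filter (fun i => (2 * i + 1) * m < n))
    (fun i _ => hgf i)
  have h3 := cosh_div_sinh_ge hy0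
  have h4 := one_div_sinh_le (half_pos hy0)
  have h5 : m ^ 2 / (A * s ^ 3) * (48 / y ^ 3) * (1 / (2 * Real.sinh (y / 2))) ≤
    m ^ 2 / (A * s ^ 3) * (48 / y ^ 3) * (1 / (2 * (y / 2))) := by gcongr
  have e1 : 1 / (2 * y ^ 2) = A ^ 2 * s ^ 2 / 2 * (1 / (m : ℝ) ^ 2) := by
    rw [hy]; field_simp
  have e2 : m ^ 2 / (A * s ^ 3) * (48 / y ^ 3) * (1 / (2 * (y / 2))) =
      48 * A ^ 3 * s * (1 / (m : ℝ) ^ 2) := by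
    rw [hy]; field_simp
  rw [e1] at h3
  rw [e2] at h5
  linarith

lemma main_sum_ge {n : ℕ} {s : ℝ} (hs3 : 3 ≤ s) (hsn : s ^ 2 = n) (hsA : A ≤ s) :
    s ^ 2 - (A ^ 2 + 1 + 96 * A) * s ≤
    ∑ m ∈ Finset.Icc 1 ⌊s⌋₊, ∑ i ∈ Finset.range n, (if (2 * i + 1) * m < n then
      (2 * i + 1 : ℝ) * (Real.exp (-(((2 * i + 1) * m : ℝ) / (A * s))) *
        (1 - ((2 * i + 1) * m : ℝ) ^ 2 / (A * s ^ 3))) else 0) := by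
  have hA := A_pos
  have hs : 0 < s := by linarith
  set M := ⌊s⌋₊ with hM
  have hM1 : (M : ℝ) ≤ s := Nat.floor_le hs.le
  have hM2 : s / 2 ≤ M := by have := Nat.lt_floor_add_one s; linarith
  have hM0 : 1 ≤ M := Nat.le_floor (by push_cast; linarith)
  refine le_trans ?_ (Finset.sum_le_sum fun m hm =>
    inner_sum_ge (Finset.mem_Icc.1 hm).1 hs hsn hsA)
  rw [Finset.sum_sub_distrib, Finset.sum_sub_distrib, ← Finset.mul_sum, ← Finset.mul_sum]
  have h1 : A ^ 2 * s ^ 2 / 2 * (2 / A ^ 2 - 1 / M) ≤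
    A ^ 2 * s ^ 2 / 2 * ∑ m ∈ Finset.Icc 1 M, 1 / (m : ℝ) ^ 2 := by
    have := sum_inv_sq_ge M hM0
    gcongr
  have h2 : 48 * A ^ 3 * s * ∑ m ∈ Finset.Icc 1 M, 1 / (m : ℝ) ^ 2 ≤
    48 * A ^ 3 * s * (2 / A ^ 2) := by
    have := sum_inv_sq_le M
    gcongr
  have h3 : A ^ 2 * s ^ 2 / 2 * (1 / M) ≤ A ^ 2 * s := by
    calc A ^ 2 * s ^ 2 / 2 * (1 / M) ≤ A ^ 2 * s ^ 2 / 2 * (1 / (s / 2)) := by gcongr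
      _ = _ := by field_simp
  have e1 : A ^ 2 * s ^ 2 / 2 * (2 / A ^ 2 - 1 / M) = s ^ 2 - A ^ 2 * s ^ 2 / 2 * (1 / M) := by
    rw [mul_sub]; congr 1; field_simp
  have e2 : 48 * A ^ 3 * s * (2 / A ^ 2) = 96 * A * s := by field_simp; norm_num
  simp only [Finset.sum_const, Nat.card_Icc, Nat.add_sub_cancel, nsmul_eq_mul, mul_one]
  linarith

/-- Already the terms with `m = 1` make `∑ j · (j m) · e^{-jm/(A s)}` of order `s³`. -/
lemma first_moment_ge {n : ℕ} {s : ℝ} (hs3 : 3 ≤ s) (hsn : s ^ 2 = n) :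
    Real.exp (-(2 / A)) * s ^ 3 / 8 ≤
    ∑ m ∈ Finset.Icc 1 ⌊s⌋₊, ∑ i ∈ Finset.range n, (if (2 * i + 1) * m < n then
      (2 * i + 1 : ℝ) * (Real.exp (-(((2 * i + 1) * m : ℝ) / (A * s))) *
        ((2 * i + 1) * m : ℝ)) else 0) := by
  have hA := A_pos
  have hs : 0 < s := by linarith
  set M := ⌊s⌋₊ with hM
  have hM1 : (M : ℝ) ≤ s := Nat.floor_le hs.le
  have hM2 : s / 2 ≤ M := by have := Nat.lt_floor_add_one s; linarith
  have hM0 : 1 ≤ M := Nat.le_floor (by push_cast; linarith)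
  have hMn : 2 * M < n := by
    have : (2 * M : ℝ) < n := by rw [← hsn]; nlinarith
    exact_mod_cast this
  refine le_trans ?_ (Finset.single_le_sum (f := fun m : ℕ => ∑ i ∈ Finset.range n,
      (if (2 * i + 1) * m < n then
      (2 * i + 1 : ℝ) * (Real.exp (-(((2 * i + 1) * m : ℝ) / (A * s))) *
        ((2 * i + 1) * m : ℝ)) else 0))
    (fun m _ => Finset.sum_nonneg fun i _ => ?_) (Finset.mem_Icc.2 ⟨le_rfl, hM0⟩))
  swap
  · split_ifs <;> positivity
  have hcube : ∀ k : ℕ, (k : ℝ) ^ 3 ≤ ∑ i ∈ Finset.range k, (2 * i + 1 : ℝ) ^ 2 := by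
    intro k
    induction k with
    | zero => simp
    | succ k ih =>
      rw [Finset.sum_range_succ]; push_cast
      have : (0 : ℝ) ≤ k := by positivity
      nlinarith
  calc Real.exp (-(2 / A)) * s ^ 3 / 8 = Real.exp (-(2 / A)) * (s / 2) ^ 3 := by ring
    _ ≤ Real.exp (-(2 / A)) * (M : ℝ) ^ 3 := by gcongr
    _ ≤ Real.exp (-(2 / A)) * ∑ i ∈ Finset.range M, (2 * i + 1 : ℝ) ^ 2 := by
      gcongr; exact hcube M
    _ = ∑ i ∈ Finset.range M, Real.exp (-(2 / A)) * (2 * i + 1 : ℝ) ^ 2 := by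
      rw [Finset.mul_sum]
    _ ≤ ∑ i ∈ Finset.range M, (if (2 * i + 1) * 1 < n then
      (2 * i + 1 : ℝ) * (Real.exp (-(((2 * i + 1) * (1 : ℕ) : ℝ) / (A * s))) *
        ((2 * i + 1) * (1 : ℕ) : ℝ)) else 0) := by
      refine Finset.sum_le_sum fun i hi => ?_
      have hi := Finset.mem_range.1 hi
      rw [if_pos (by omega)]
      have h1 : Real.exp (-(2 / A)) ≤ Real.exp (-(((2 * i + 1) * (1 : ℕ) : ℝ) / (A * s))) := by
        apply Real.exp_le_exp.2
        rw [neg_le_neg_iff, div_le_div_iff₀ (by positivity) hA]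
        have : (2 * i + 1 : ℝ) ≤ 2 * M := by exact_mod_cast (by omega : 2 * i + 1 ≤ 2 * M)
        push_cast
        nlinarith
      calc _ ≤ Real.exp (-(((2 * i + 1) * (1 : ℕ) : ℝ) / (A * s))) * (2 * i + 1 : ℝ) ^ 2 := by
            gcongr
        _ = _ := by push_cast; ring
    _ ≤ _ := by
      refine Finset.sum_le_sum_of_subset_of_nonneg
        (Finset.range_subset_range.2 (by omega)) fun i _ _ => ?_
      split_ifs <;> positivity

/-- The exponent of the polynomial loss in the lower bound for `d(n)`. -/
noncomputable def Kexp : ℝ := 8 * Real.exp (2 / A) * (A ^ 2 + 1 + 96 * A)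

lemma Kexp_pos : 0 < Kexp := by have := A_pos; unfold Kexp; positivity

/-- Induction step: the gain from `n ^ (-Kexp)` outweighs the second order loss in `√(n - k)`. -/
lemma lower_step {n : ℕ} {c : ℝ} (hc : 0 < c) (hs3 : 3 ≤ √n) (hsA : A ≤ √n)
    (ih : ∀ k < n, 1 ≤ k → c * Real.exp (2 / A * √k - Kexp * Real.log k) ≤
      ((Nat.Partition.distincts k).card : ℝ)) :
    c * Real.exp (2 / A * √n - Kexp * Real.log n) ≤ ((Nat.Partition.distincts n).card : ℝ) := by
  have hA := A_pos
  have hK := Kexp_pos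
  set s := √(n : ℝ) with hs
  have hs0 : 0 < s := by linarith
  have hsn : s ^ 2 = n := Real.sq_sqrt (by positivity)
  set G := c * Real.exp (2 / A * s - Kexp * Real.log n) with hG
  have hG0 : 0 < G := by positivity
  have h1 := distincts_rec n ⌊s⌋₊ n
  have h1' : (∑ m ∈ Finset.Icc 1 ⌊s⌋₊, ∑ i ∈ Finset.range n,
      (if (2 * i + 1) * m < n then
        (2 * i + 1 : ℝ) * ((Nat.Partition.distincts (n - (2 * i + 1) * m)).card : ℝ) else 0))
      ≤ s ^ 2 * ((Nat.Partition.distincts n).card : ℝ) := by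
    rw [hsn]; exact_mod_cast h1
  have h2 := main_sum_ge hs3 hsn hsA
  have h3 := first_moment_ge hs3 hsn
  have h4 : s ^ 2 ≤ ∑ m ∈ Finset.Icc 1 ⌊s⌋₊, ∑ i ∈ Finset.range n, (if (2 * i + 1) * m < n then
      (2 * i + 1 : ℝ) * (Real.exp (-(((2 * i + 1) * m : ℝ) / (A * s))) *
        (1 - ((2 * i + 1) * m : ℝ) ^ 2 / (A * s ^ 3) +
          Kexp * ((2 * i + 1) * m : ℝ) / s ^ 2)) else 0) := by
    have h3' := mul_le_mul_of_nonneg_left h3 (by positivity : 0 ≤ Kexp / s ^ 2)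
    have e : Kexp / s ^ 2 * (Real.exp (-(2 / A)) * s ^ 3 / 8) = (A ^ 2 + 1 + 96 * A) * s := by
      unfold Kexp
      rw [Real.exp_neg]
      field_simp
    rw [e, Finset.mul_sum] at h3'
    have h5 := add_le_add h2 h3'
    rw [← Finset.sum_add_distrib] at h5
    calc s ^ 2 = _ := by ring
      _ ≤ _ := h5
      _ = _ := by
        refine Finset.sum_congr rfl fun m _ => ?_
        rw [Finset.mul_sum, ← Finset.sum_add_distrib]
        refine Finset.sum_congr rfl fun i _ => ?_
        split_ifs
        · ring
        · simp
  have h5 : G * s ^ 2 ≤ s ^ 2 * ((Nat.Partition.distincts n).card : ℝ) := by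
    refine le_trans (mul_le_mul_of_nonneg_left h4 hG0.le) (le_trans ?_ h1')
    rw [Finset.mul_sum]
    refine Finset.sum_le_sum fun m hm => ?_
    rw [Finset.mul_sum]
    refine Finset.sum_le_sum fun i _ => ?_
    have hm1 := (Finset.mem_Icc.1 hm).1
    split_ifs with hlt
    · have hk : ((n - (2 * i + 1) * m : ℕ) : ℝ) = s ^ 2 - (2 * i + 1) * m := by
        rw [hsn, Nat.cast_sub hlt.le]; push_cast; ring
      have hpos : 0 < (2 * i + 1) * m := by positivity
      have hi := ih (n - (2 * i + 1) * m) (by omega) (by omega)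
      rw [hk] at hi
      have hr := exp_ratio_ge (k := (2 * i + 1) * m) (K := Kexp) hs0 (by positivity)
        (by rw [hsn]; exact_mod_cast hlt) hK.le
      have hr' := mul_le_mul_of_nonneg_left hr hc.le
      have := mul_le_mul_of_nonneg_left (hr'.trans hi) (by positivity : (0 : ℝ) ≤ 2 * i + 1)
      refine le_trans (le_of_eq ?_) this
      rw [hG, ← hsn]; ring
    · simp
  exact le_of_mul_le_mul_right (h5.trans_eq (mul_comm _ _)) (by positivity : 0 < s ^ 2)

/-- `d(n) ≥ c n^{-K} e^{π √(n/3)}`; note `2 / A = π / √3`. -/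
lemma distincts_lower : ∃ c > (0 : ℝ), ∀ n : ℕ, 1 ≤ n →
    c * Real.exp (2 / A * √n - Kexp * Real.log n) ≤ ((Nat.Partition.distincts n).card : ℝ) := by
  have hA := A_pos
  have hK := Kexp_pos
  obtain ⟨B, hB⟩ : ∃ B : ℝ, B = max 3 A := ⟨_, rfl⟩
  refine ⟨Real.exp (-(2 / A * B)), Real.exp_pos _, fun n => ?_⟩
  induction n using Nat.strong_induction_on with
  | _ n ih =>
    intro hn
    by_cases h : B ≤ √n
    · refine lower_step (Real.exp_pos _) ?_ ?_ fun k hk hk1 => ih k hk hk1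
      · exact (le_max_left 3 A).trans (hB ▸ h)
      · exact (le_max_right 3 A).trans (hB ▸ h)
    · have h1 : (1 : ℝ) ≤ ((Nat.Partition.distincts n).card : ℝ) := by
        exact_mod_cast distincts_card_pos n
      refine le_trans ?_ h1
      rw [← Real.exp_add, Real.exp_le_one_iff]
      have h2 : 0 ≤ Real.log n := Real.log_nonneg (by exact_mod_cast hn)
      have h3 : 2 / A * √n ≤ 2 / A * B := by
        push Not at h
        gcongr
      have := mul_nonneg hK.le h2
      linarith

/-! ### Upper bound for the partition function of the independent model -/

lemma euler_prod_identity (q : ℝ) (n : ℕ) :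
    (∏ i ∈ Finset.range n, (1 + q ^ (i + 1)) * (1 - q ^ (2 * i + 1))) *
      ∏ i ∈ Finset.range n, (1 - q ^ (i + 1)) = ∏ i ∈ Finset.range (2 * n), (1 - q ^ (i + 1)) := by
  induction n with
  | zero => simp
  | succ n ih =>
    rw [show 2 * (n + 1) = 2 * n + 1 + 1 by ring, Finset.prod_range_succ,
      Finset.prod_range_succ, Finset.prod_range_succ, Finset.prod_range_succ, ← ih]
    ring

/-- Finite version of Euler's `∏ (1 + q^k) = ∏_{j odd} 1 / (1 - q^j)`. -/
lemma euler_prod_le {q : ℝ} (h0 : 0 < q) (h1 : q < 1) (n : ℕ) :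
    ∏ i ∈ Finset.range n, (1 + q ^ (i + 1)) * (1 - q ^ (2 * i + 1)) ≤ 1 := by
  have hf : ∀ i : ℕ, 0 < 1 - q ^ (i + 1) := fun i =>
    sub_pos.2 (pow_lt_one₀ h0.le h1 (Nat.succ_ne_zero i))
  have hp : 0 < ∏ i ∈ Finset.range n, (1 - q ^ (i + 1)) := Finset.prod_pos fun i _ => hf i
  refine le_of_mul_le_mul_right ?_ hp
  rw [euler_prod_identity, one_mul, two_mul, Finset.prod_range_add]
  refine mul_le_of_le_one_right hp.le (Finset.prod_le_one (fun i _ => (hf _).le) fun i _ => ?_)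
  have : 0 < q ^ (n + i + 1) := by positivity
  linarith

lemma sum_neg_log_le {β : ℝ} (hβ : 0 < β) (n : ℕ) :
    ∑ i ∈ Finset.range n, -Real.log (1 - Real.exp (-β) ^ (2 * i + 1)) ≤ 1 / (A ^ 2 * β) := by
  have hq : Real.exp (-β) < 1 := by rw [Real.exp_lt_one_iff]; linarith
  have h1 : HasSum (fun m : ℕ => ∑ i ∈ Finset.range n,
      (Real.exp (-β) ^ (2 * i + 1)) ^ (m + 1) / ((m : ℝ) + 1))
      (∑ i ∈ Finset.range n, -Real.log (1 - Real.exp (-β) ^ (2 * i + 1))) := by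
    refine hasSum_sum fun i _ => Real.hasSum_pow_div_log_of_abs_lt_one ?_
    rw [abs_of_pos (by positivity)]
    exact pow_lt_one₀ (Real.exp_pos _).le hq (by omega)
  have h2 : HasSum (fun m : ℕ => 1 / (2 * β) * (1 / ((m + 1 : ℕ) : ℝ) ^ 2))
      (1 / (2 * β) * (π ^ 2 / 6)) := by
    refine HasSum.mul_left _ ?_
    have := (hasSum_nat_add_iff' 1).2 hasSum_zeta_two
    simpa using this
  have h3 := hasSum_le (fun m => ?_) h1 h2
  · refine h3.trans (le_of_eq ?_)
    rw [A_sq]; field_simp; norm_num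
  · have hy : 0 < β * (m + 1) := by positivity
    have h4 := (sum_le_hasSum (Finset.range n) (fun i _ => (Real.exp_pos _).le)
      (hasSum_exp_odd hy)).trans (one_div_sinh_le hy)
    rw [← Finset.sum_div]
    have e : ∀ i : ℕ, (Real.exp (-β) ^ (2 * i + 1)) ^ (m + 1) =
        Real.exp (-(2 * i + 1) * (β * (m + 1))) := by
      intro i
      rw [← pow_mul, ← Real.exp_nat_mul]; push_cast; ring_nf
    simp only [e]
    calc _ ≤ 1 / (2 * (β * (m + 1))) / ((m : ℝ) + 1) := by gcongr
      _ = _ := by push_cast; field_simp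

lemma prod_one_add_exp_le {β : ℝ} (hβ : 0 < β) (n : ℕ) :
    ∏ k ∈ Finset.Icc 1 n, (1 + Real.exp (-β * k)) ≤ Real.exp (1 / (A ^ 2 * β)) := by
  have hq : Real.exp (-β) < 1 := by rw [Real.exp_lt_one_iff]; linarith
  have h0 := Real.exp_pos (-β)
  set q := Real.exp (-β) with hqdef
  have hf : ∀ i : ℕ, 0 < 1 - q ^ (2 * i + 1) := fun i =>
    sub_pos.2 (pow_lt_one₀ h0.le hq (Nat.succ_ne_zero (2 * i)))
  have e : ∏ k ∈ Finset.Icc 1 n, (1 + Real.exp (-β * k)) =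
      ∏ i ∈ Finset.range n, (1 + q ^ (i + 1)) := by
    rw [← Finset.Ico_add_one_right_eq_Icc, Finset.prod_Ico_eq_prod_range]
    refine Finset.prod_congr (by simp) fun i _ => ?_
    rw [hqdef, ← Real.exp_nat_mul]; push_cast; ring_nf
  rw [e]
  have h1 := euler_prod_le h0 hq n
  rw [Finset.prod_mul_distrib] at h1
  have hp : 0 < ∏ i ∈ Finset.range n, (1 - q ^ (2 * i + 1)) := Finset.prod_pos fun i _ => hf i
  calc _ ≤ (∏ i ∈ Finset.range n, (1 - q ^ (2 * i + 1)))⁻¹ := by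
        rw [← one_div, le_div_iff₀ hp]; exact h1
    _ = Real.exp (∑ i ∈ Finset.range n, -Real.log (1 - q ^ (2 * i + 1))) := by
        rw [Finset.sum_neg_distrib, Real.exp_neg, Real.exp_sum]
        congr 1
        exact Finset.prod_congr rfl fun i _ => (Real.exp_log (hf i)).symm
    _ ≤ _ := Real.exp_le_exp.2 (sum_neg_log_le hβ n)

/-! ### Exponential moments under the uniform measure -/

/-- The number of parts of `p` that are at most `M`. -/
def Sp {n : ℕ} (p : Nat.Partition n) (M : ℕ) : ℝ := ∑ k ∈ Finset.Icc 1 M, (X p k : ℝ)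

/-- The expected number of parts at most `M` when each `k` is a part independently with odds
`e^{-βk} : 1`. -/
noncomputable def mu (β : ℝ) (M : ℕ) : ℝ := ∑ k ∈ Finset.Icc 1 M, 1 / (1 + Real.exp (β * k))

lemma mu_nonneg (β : ℝ) (M : ℕ) : 0 ≤ mu β M := Finset.sum_nonneg fun k _ => by positivity

lemma mu_le {β : ℝ} (hβ : 0 < β) (M : ℕ) : mu β M ≤ 1 / β := by
  have h1 : Real.exp (-β) < 1 := by rw [Real.exp_lt_one_iff]; linarith
  have h0 := Real.exp_pos (-β)
  have e : mu β M = ∑ i ∈ Finset.range M, 1 / (1 + Real.exp (β * (i + 1))) := by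
    unfold mu
    rw [← Finset.Ico_add_one_right_eq_Icc, Finset.sum_Ico_eq_sum_range]
    refine Finset.sum_congr (by simp) fun i _ => ?_
    push_cast; ring_nf
  rw [e]
  calc _ ≤ ∑ i ∈ Finset.range M, Real.exp (-β) * Real.exp (-β) ^ i := by
        refine Finset.sum_le_sum fun i _ => ?_
        rw [← Real.exp_nat_mul, ← Real.exp_add,
          show -β + i * -β = -(β * (i + 1)) by ring, Real.exp_neg, ← one_div]
        gcongr
        linarith
    _ ≤ Real.exp (-β) * (1 - Real.exp (-β))⁻¹ :=
        sum_le_hasSum _ (fun i _ => by positivity)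
          ((hasSum_geometric_of_lt_one h0.le h1).mul_left _)
    _ ≤ 1 / β := by
        rw [← div_eq_mul_inv, div_le_div_iff₀ (by linarith) hβ]
        have h2 := Real.add_one_le_exp β
        have h3 : Real.exp (-β) * Real.exp β = 1 := by rw [← Real.exp_add]; simp
        nlinarith

lemma distincts_weight {n : ℕ} {p : Nat.Partition n} (hp : p ∈ Nat.Partition.distincts n)
    (β θ : ℝ) (M : ℕ) :
    Real.exp (-β * n) * Real.exp (θ * Sp p M) =
      ∏ k ∈ p.parts.toFinset, Real.exp (-β * k) * Real.exp (if k ≤ M then θ else 0) := by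
  classical
  have hnd : p.parts.Nodup := by simpa [Nat.Partition.distincts] using hp
  have h1 : (n : ℝ) = ∑ k ∈ p.parts.toFinset, (k : ℝ) := by
    have h := Finset.sum_multiset_count p.parts
    rw [p.parts_sum] at h
    conv_lhs => rw [h]
    push_cast
    refine Finset.sum_congr rfl fun k hk => ?_
    rw [Multiset.count_eq_one_of_mem hnd (Multiset.mem_toFinset.1 hk)]
    simp
  have h2 : Sp p M = ∑ k ∈ p.parts.toFinset, (if k ≤ M then (1 : ℝ) else 0) := by
    unfold Sp X
    rw [← Finset.sum_filter]
    symm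
    refine Finset.sum_subset_zero_on_sdiff (fun k hk => ?_) (fun k hk => ?_) (fun k hk => ?_)
    · simp only [Finset.mem_filter, Multiset.mem_toFinset, Finset.mem_Icc] at hk ⊢
      exact ⟨p.parts_pos hk.1, hk.2⟩
    · simp only [Finset.mem_filter, Multiset.mem_toFinset, Finset.mem_Icc, Finset.mem_sdiff,
        not_and] at hk
      have : k ∉ p.parts := fun h => hk.2 h hk.1.2
      simp [Multiset.count_eq_zero_of_notMem this]
    · simp only [Finset.mem_filter, Multiset.mem_toFinset] at hk
      simp [Multiset.count_eq_one_of_mem hnd hk.1]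
  rw [Finset.prod_mul_distrib, ← Real.exp_sum, ← Real.exp_sum, h1, h2, Finset.mul_sum,
    Finset.mul_sum]
  simp

lemma exp_moment_le_prod (n : ℕ) (β θ : ℝ) (M : ℕ) :
    ∑ p ∈ Nat.Partition.distincts n, Real.exp (-β * n) * Real.exp (θ * Sp p M) ≤
      ∏ k ∈ Finset.Icc 1 n, (1 + Real.exp (-β * k) * Real.exp (if k ≤ M then θ else 0)) := by
  classical
  rw [Finset.prod_one_add]
  rw [Finset.sum_congr rfl fun p hp => distincts_weight hp β θ M]
  rw [← Finset.sum_image (g := fun p : Nat.Partition n => p.parts.toFinset)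
    (f := fun t : Finset ℕ =>
      ∏ k ∈ t, Real.exp (-β * k) * Real.exp (if k ≤ M then θ else 0))]
  · refine Finset.sum_le_sum_of_subset_of_nonneg (fun t ht => ?_) fun t _ _ => by positivity
    obtain ⟨p, _, rfl⟩ := Finset.mem_image.1 ht
    rw [Finset.mem_powerset]
    intro k hk
    have hk := Multiset.mem_toFinset.1 hk
    exact Finset.mem_Icc.2 ⟨p.parts_pos hk, Nat.Partition.le_of_mem_parts hk⟩
  · intro p hp p' hp' h
    have h1 : p.parts.Nodup := by simpa [Nat.Partition.distincts] using hp
    have h2 : p'.parts.Nodup := by simpa [Nat.Partition.distincts] using hp'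
    refine Nat.Partition.ext ?_
    have h := congrArg Finset.val h
    simpa [h1.dedup, h2.dedup] using h

lemma tilted_prod_le (n : ℕ) (β θ : ℝ) (M : ℕ) (hM : M ≤ n) :
    ∏ k ∈ Finset.Icc 1 n, (1 + Real.exp (-β * k) * Real.exp (if k ≤ M then θ else 0)) ≤
      (∏ k ∈ Finset.Icc 1 n, (1 + Real.exp (-β * k))) * Real.exp ((Real.exp θ - 1) * mu β M) := by
  classical
  have e : (Real.exp θ - 1) * mu β M = ∑ k ∈ Finset.Icc 1 n,
      (if k ≤ M then (Real.exp θ - 1) * (1 / (1 + Real.exp (β * k))) else 0) := by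
    unfold mu
    rw [Finset.mul_sum, ← Finset.sum_filter]
    refine Finset.sum_congr ?_ fun _ _ => rfl
    ext k
    simp only [Finset.mem_filter, Finset.mem_Icc]
    omega
  rw [e, Real.exp_sum, ← Finset.prod_mul_distrib]
  refine Finset.prod_le_prod (fun k _ => by positivity) fun k _ => ?_
  split_ifs
  · have h := Real.add_one_le_exp ((Real.exp θ - 1) * (1 / (1 + Real.exp (β * k))))
    refine le_trans (le_of_eq ?_) (mul_le_mul_of_nonneg_left h (by positivity))
    rw [show -β * (k : ℝ) = -(β * k) by ring, Real.exp_neg]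
    have := Real.exp_pos (β * k)
    field_simp
    ring
  · simp

/-- Centred exponential moment bound.  The factor `exp (β n + 1 / (A² β))` equals `e^{π√(n/3)}` at
`β = 1 / (A √n)` and is matched by the lower bound for `d(n)`. -/
lemma centred_moment_le {n : ℕ} {β θ : ℝ} {M : ℕ} (hβ : 0 < β) (hM : M ≤ n) (hθ : |θ| ≤ 1) :
    ∑ p ∈ Nat.Partition.distincts n, Real.exp (θ * (Sp p M - mu β M)) ≤
      Real.exp (β * n + 1 / (A ^ 2 * β) + θ ^ 2 / β) := by
  have h1 := (exp_moment_le_prod n β θ M).trans (tilted_prod_le n β θ M hM)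
  have h2 : (Real.exp θ - 1) * mu β M ≤ θ * mu β M + θ ^ 2 / β := by
    have h3 := Real.abs_exp_sub_one_sub_id_le hθ
    have h4 := (abs_le.1 h3).2
    have h5 := mu_le hβ M
    have h6 := mu_nonneg β M
    calc (Real.exp θ - 1) * mu β M ≤ (θ + θ ^ 2) * mu β M := by gcongr; linarith
      _ = θ * mu β M + θ ^ 2 * mu β M := by ring
      _ ≤ θ * mu β M + θ ^ 2 * (1 / β) := by gcongr
      _ = _ := by ring
  rw [← Finset.mul_sum] at h1
  have h7 : (∏ k ∈ Finset.Icc 1 n, (1 + Real.exp (-β * k))) *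
      Real.exp ((Real.exp θ - 1) * mu β M) ≤
      Real.exp (1 / (A ^ 2 * β)) * Real.exp (θ * mu β M + θ ^ 2 / β) := by
    have := prod_one_add_exp_le hβ n
    gcongr
  have h8 := mul_le_mul_of_nonneg_left (h1.trans h7)
    (Real.exp_pos (β * n - θ * mu β M)).le
  rw [← mul_assoc, ← Real.exp_add, ← Real.exp_add, ← Real.exp_add] at h8
  calc _ = Real.exp (β * n - θ * mu β M + -β * n) *
        ∑ p ∈ Nat.Partition.distincts n, Real.exp (θ * Sp p M) := by
        rw [Finset.mul_sum]
        refine Finset.sum_congr rfl fun p _ => ?_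
        rw [← Real.exp_add]; ring_nf
    _ ≤ _ := h8
    _ = _ := by ring_nf

/-! ### Comparison of the mean with the limit shape -/

lemma exp_mul_le_of_mem_unit {p : ℝ} (h0 : 0 ≤ p) (h1 : p ≤ 1) (x : ℝ) :
    Real.exp (p * x) ≤ 1 - p + p * Real.exp x := by
  have := convexOn_exp.2 (Set.mem_univ 0) (Set.mem_univ x) (sub_nonneg.2 h1) h0 (by ring)
  simpa using this

/-- The secant slopes of the convex function `u ↦ log (1 + e^{-u})` lie between its derivatives
`-1 / (1 + e^u)` at the end points.  For `v < u` the inequality is read backwards. -/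
lemma log_one_add_exp_sub_le (u v : ℝ) :
    Real.log (1 + Real.exp (-u)) - Real.log (1 + Real.exp (-v)) ≤ (v - u) / (1 + Real.exp u) := by
  have hu := Real.exp_pos u
  have hp0 : (0 : ℝ) ≤ 1 / (1 + Real.exp u) := by positivity
  have hp1 : 1 / (1 + Real.exp u) ≤ 1 := by
    rw [div_le_one (by positivity)]; linarith
  have h := exp_mul_le_of_mem_unit hp0 hp1 (u - v)
  have e : 1 - 1 / (1 + Real.exp u) + 1 / (1 + Real.exp u) * Real.exp (u - v) =
      (1 + Real.exp (-v)) / (1 + Real.exp (-u)) := by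
    rw [sub_eq_add_neg u v, Real.exp_add, Real.exp_neg u]
    field_simp
    ring
  rw [e] at h
  have h2 := Real.log_le_log (Real.exp_pos _) h
  rw [Real.log_exp, Real.log_div (by positivity) (by positivity)] at h2
  have e2 : (v - u) / (1 + Real.exp u) = -(1 / (1 + Real.exp u) * (u - v)) := by ring
  rw [e2]; linarith

lemma L_eq (t : ℝ) : L t = A * (Real.log 2 - Real.log (1 + Real.exp (-(t / A)))) := by
  unfold L
  rw [Real.log_div (by norm_num) (by positivity), neg_div]

lemma mu_L_compare {s : ℝ} (hs : 0 < s) (M : ℕ) :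
    mu (1 / (A * s)) M ≤ s * L (M / s) ∧
    s * L (M / s) ≤ mu (1 / (A * s)) M + 1 / 2 - 1 / (1 + Real.exp (1 / (A * s) * M)) := by
  have hA := A_pos
  induction M with
  | zero => norm_num [mu, L]
  | succ M ih =>
    have hmu : mu (1 / (A * s)) (M + 1) = mu (1 / (A * s)) M +
        1 / (1 + Real.exp (1 / (A * s) * (M + 1 : ℕ))) := by
      unfold mu
      rw [Finset.sum_Icc_succ_top (by omega)]
    have e1 : ((M + 1 : ℕ) : ℝ) / s / A = 1 / (A * s) * (M + 1 : ℕ) := by field_simp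
    have e0 : (M : ℝ) / s / A = 1 / (A * s) * M := by field_simp
    have hd : s * L ((M + 1 : ℕ) / s) - s * L (M / s) = A * s *
      (Real.log (1 + Real.exp (-(1 / (A * s) * M))) -
        Real.log (1 + Real.exp (-(1 / (A * s) * (M + 1 : ℕ))))) := by
      rw [L_eq, L_eq, e0, e1]; ring
    have ed : 1 / (A * s) * (M + 1 : ℕ) - 1 / (A * s) * M = 1 / (A * s) := by push_cast; ring
    have h1 := log_one_add_exp_sub_le (1 / (A * s) * M) (1 / (A * s) * (M + 1 : ℕ))
    have h2 := log_one_add_exp_sub_le (1 / (A * s) * (M + 1 : ℕ)) (1 / (A * s) * M)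
    rw [ed] at h1
    rw [← neg_sub (1 / (A * s) * ((M + 1 : ℕ) : ℝ)), ed] at h2
    have hAs : 0 < A * s := by positivity
    have h1' := mul_le_mul_of_nonneg_left h1 hAs.le
    have h2' := mul_le_mul_of_nonneg_left h2 hAs.le
    have f1 : A * s * (1 / (A * s) / (1 + Real.exp (1 / (A * s) * M))) =
        1 / (1 + Real.exp (1 / (A * s) * M)) := by field_simp
    have f2 : A * s * (-(1 / (A * s)) / (1 + Real.exp (1 / (A * s) * (M + 1 : ℕ)))) =
        -(1 / (1 + Real.exp (1 / (A * s) * (M + 1 : ℕ)))) := by field_simp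
    rw [f1] at h1'
    rw [f2] at h2'
    constructor <;> linarith [ih.1, ih.2]

/-- For every `t ≥ 0` the shape `√n L(t)` is within a constant of the mean at the integer
`min ⌊t √n⌋ n`; the truncation at `n` matters only where `L` is nearly constant. -/
lemma mu_L_close {n : ℕ} {s t : ℝ} (hs : 0 < s) (hsn : s ^ 2 = n) (ht : 0 ≤ t) :
    |s * L t - mu (1 / (A * s)) (min ⌊t * s⌋₊ n)| ≤ A ^ 2 + 2 := by
  have hA := A_pos
  set M := min ⌊t * s⌋₊ n with hM
  obtain ⟨h1, h2⟩ := mu_L_compare hs M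
  have hpos : (0 : ℝ) ≤ 1 / (1 + Real.exp (1 / (A * s) * M)) := by positivity
  have hMt : (M : ℝ) / s ≤ t := by
    rw [div_le_iff₀ hs]
    exact le_trans (by exact_mod_cast min_le_left _ _) (Nat.floor_le (by positivity))
  have hd : s * L t - s * L (M / s) = s * (A *
      (Real.log (1 + Real.exp (-(M / s / A))) - Real.log (1 + Real.exp (-(t / A))))) := by
    rw [L_eq, L_eq]; ring
  have hlow : 0 ≤ s * L t - s * L (M / s) := by
    rw [hd]
    have : Real.log (1 + Real.exp (-(t / A))) ≤ Real.log (1 + Real.exp (-(M / s / A))) := by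
      gcongr
    have := sub_nonneg.2 this
    positivity
  have hup : s * L t - s * L (M / s) ≤ A ^ 2 + 1 := by
    rw [hd]
    rcases le_total ⌊t * s⌋₊ n with hle | hle
    · have hMf : M = ⌊t * s⌋₊ := min_eq_left hle
      have hlt : t * s < M + 1 := by rw [hMf]; exact Nat.lt_floor_add_one _
      have h3 := log_one_add_exp_sub_le (M / s / A) (t / A)
      have h4 : (t / A - M / s / A) / (1 + Real.exp (M / s / A)) ≤ 1 / (s * A) := by
        have e : t / A - M / s / A = (t * s - M) / (s * A) := by field_simp
        rw [e]
        have hx : (t * s - M) / (s * A) ≤ 1 / (s * A) := by gcongr; linarith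
        refine le_trans (div_le_self ?_ ?_) hx
        · rw [div_le_iff₀ hs] at hMt
          exact div_nonneg (by linarith) (by positivity)
        · linarith [Real.exp_pos (M / s / A)]
      calc _ ≤ s * (A * (1 / (s * A))) := by gcongr; exact h3.trans h4
        _ = 1 := by field_simp
        _ ≤ _ := by nlinarith
    · have hMf : M = n := min_eq_right hle
      have e : (M : ℝ) / s / A = s / A := by rw [hMf, ← hsn]; field_simp
      rw [e]
      have h3 : Real.log (1 + Real.exp (-(s / A))) ≤ A / s := by
        have h4 := Real.log_le_sub_one_of_pos (by positivity : 0 < 1 + Real.exp (-(s / A)))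
        have h5 := Real.add_one_le_exp (s / A)
        have h6 : Real.exp (-(s / A)) ≤ A / s := by
          rw [Real.exp_neg, ← one_div, show A / s = 1 / (s / A) by field_simp]
          gcongr
          linarith
        linarith
      have h7 : 0 ≤ Real.log (1 + Real.exp (-(t / A))) :=
        Real.log_nonneg (by linarith [Real.exp_pos (-(t / A))])
      calc _ ≤ s * (A * (A / s)) := by gcongr; linarith
        _ = A ^ 2 := by field_simp
        _ ≤ _ := by linarith
  rw [abs_le]
  constructor <;> nlinarith

lemma Sp_min {n : ℕ} (p : Nat.Partition n) (M : ℕ) : Sp p (min M n) = Sp p M := by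
  unfold Sp
  refine Finset.sum_subset (Finset.Icc_subset_Icc_right (min_le_left _ _)) fun k hk hk' => ?_
  have : k ∉ p.parts := fun h => hk' (by
    have := Nat.Partition.le_of_mem_parts h
    simp only [Finset.mem_Icc] at hk ⊢
    omega)
  simp [X, Multiset.count_eq_zero_of_notMem this]

/-! ### Chernoff bound and union bound -/

lemma card_deviation_le {n : ℕ} {β θ a : ℝ} (hβ : 0 < β) (hθ0 : 0 ≤ θ) (hθ : θ ≤ 1)
    (E : Finset (Nat.Partition n)) (hE : E ⊆ Nat.Partition.distincts n)
    (h : ∀ p ∈ E, ∃ M ≤ n, a ≤ |Sp p M - mu β M|) :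
    (E.card : ℝ) ≤ (n + 1) * (2 * (Real.exp (-θ * a) *
      Real.exp (β * n + 1 / (A ^ 2 * β) + θ ^ 2 / β))) := by
  classical
  have hθa : |θ| ≤ 1 := by rwa [abs_of_nonneg hθ0]
  calc (E.card : ℝ) = ∑ p ∈ E, 1 := by simp
    _ ≤ ∑ p ∈ E, ∑ M ∈ Finset.range (n + 1), Real.exp (-θ * a) *
        (Real.exp (θ * (Sp p M - mu β M)) + Real.exp (-θ * (Sp p M - mu β M))) := by
        refine Finset.sum_le_sum fun p hp => ?_
        obtain ⟨M, hMn, hM⟩ := h p hp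
        refine le_trans ?_ (Finset.single_le_sum (f := fun M => Real.exp (-θ * a) *
          (Real.exp (θ * (Sp p M - mu β M)) + Real.exp (-θ * (Sp p M - mu β M))))
          (fun M _ => by positivity) (Finset.mem_range.2 (Nat.lt_succ_of_le hMn)))
        have hex : Real.exp (θ * |Sp p M - mu β M|) ≤
            Real.exp (θ * (Sp p M - mu β M)) + Real.exp (-θ * (Sp p M - mu β M)) := by
          rcases abs_cases (Sp p M - mu β M) with ⟨h1, _⟩ | ⟨h1, _⟩
          · rw [h1]; linarith [Real.exp_pos (-θ * (Sp p M - mu β M))]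
          · rw [h1, mul_neg, ← neg_mul]; linarith [Real.exp_pos (θ * (Sp p M - mu β M))]
        calc (1 : ℝ) = Real.exp (-θ * a) * Real.exp (θ * a) := by
              rw [← Real.exp_add]; simp
          _ ≤ Real.exp (-θ * a) * Real.exp (θ * |Sp p M - mu β M|) := by gcongr
          _ ≤ _ := by gcongr
    _ ≤ ∑ p ∈ Nat.Partition.distincts n, ∑ M ∈ Finset.range (n + 1), Real.exp (-θ * a) *
        (Real.exp (θ * (Sp p M - mu β M)) + Real.exp (-θ * (Sp p M - mu β M))) :=
        Finset.sum_le_sum_of_subset_of_nonneg hE fun p _ _ =>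
          Finset.sum_nonneg fun M _ => by positivity
    _ = ∑ M ∈ Finset.range (n + 1), ∑ p ∈ Nat.Partition.distincts n, Real.exp (-θ * a) *
        (Real.exp (θ * (Sp p M - mu β M)) + Real.exp (-θ * (Sp p M - mu β M))) :=
        Finset.sum_comm
    _ ≤ ∑ M ∈ Finset.range (n + 1), 2 * (Real.exp (-θ * a) *
          Real.exp (β * n + 1 / (A ^ 2 * β) + θ ^ 2 / β)) := by
        refine Finset.sum_le_sum fun M hM => ?_
        have hMn : M ≤ n := Nat.lt_succ_iff.1 (Finset.mem_range.1 hM)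
        rw [← Finset.mul_sum, Finset.sum_add_distrib]
        have h1 := centred_moment_le hβ hMn hθa
        have h2 := centred_moment_le (θ := -θ) hβ hMn (by rwa [abs_neg])
        rw [neg_sq] at h2
        have h3 := mul_le_mul_of_nonneg_left (add_le_add h1 h2) (Real.exp_pos (-θ * a)).le
        refine h3.trans (le_of_eq ?_)
        ring
    _ = _ := by simp

/-- The probability bound with all constants explicit; logarithmic terms are still present. -/
lemma Pn_le {c δ : ℝ} (hc : 0 < c) (n : ℕ) (hn : 1 ≤ n)
    (hlow : c * Real.exp (2 / A * √n - Kexp * Real.log n) ≤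
      ((Nat.Partition.distincts n).card : ℝ)) :
    Pn n (fun lam => ∃ t : ℝ, 0 ≤ t ∧
          |(1 / Real.sqrt n) * (∑ k ∈ Finset.Icc 1 ⌊t * Real.sqrt n⌋₊, (X lam k : ℝ)) - L t|
            > (n : ℝ) ^ (-(1 / 4 : ℝ) + δ)) ≤
      4 / c * Real.exp (A ^ 2 + 2 + A + (Kexp + 1) * Real.log n - (n : ℝ) ^ δ) := by
  classical
  have hA := A_pos
  have hn0 : (0 : ℝ) < n := by exact_mod_cast hn
  have hn1 : (1 : ℝ) ≤ n := by exact_mod_cast hn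
  set s := √(n : ℝ) with hs
  have hs0 : 0 < s := Real.sqrt_pos.2 hn0
  have hsn : s ^ 2 = n := Real.sq_sqrt hn0.le
  have hsr : s = (n : ℝ) ^ (1 / 2 : ℝ) := Real.sqrt_eq_rpow _
  set θ : ℝ := (n : ℝ) ^ (-(1 / 4) : ℝ) with hθ
  have hθ0 : 0 < θ := by positivity
  have hθ1 : θ ≤ 1 := Real.rpow_le_one_of_one_le_of_nonpos hn1 (by norm_num)
  have hθ2 : θ ^ 2 * s = 1 := by
    rw [hθ, hsr, ← Real.rpow_natCast, ← Real.rpow_mul hn0.le, ← Real.rpow_add hn0]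
    norm_num
  set a : ℝ := s * (n : ℝ) ^ (-(1 / 4 : ℝ) + δ) - (A ^ 2 + 2) with ha
  have hθa : (n : ℝ) ^ δ - (A ^ 2 + 2) ≤ θ * a := by
    have e : θ * (s * (n : ℝ) ^ (-(1 / 4 : ℝ) + δ)) = (n : ℝ) ^ δ := by
      rw [hθ, hsr, ← Real.rpow_add hn0, ← Real.rpow_add hn0]
      congr 1; ring
    rw [ha, mul_sub, e]
    have : θ * (A ^ 2 + 2) ≤ 1 * (A ^ 2 + 2) := by gcongr
    linarith
  unfold Pn
  rw [div_le_iff₀ (by exact_mod_cast distincts_card_pos n)]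
  have hcard := card_deviation_le (n := n) (β := 1 / (A * s)) (θ := θ) (a := a) (by positivity)
    hθ0.le hθ1
    (@Finset.filter _ (fun lam : Nat.Partition n => ∃ t : ℝ, 0 ≤ t ∧
          |(1 / s) * (∑ k ∈ Finset.Icc 1 ⌊t * s⌋₊, (X lam k : ℝ)) - L t|
            > (n : ℝ) ^ (-(1 / 4 : ℝ) + δ)) (Classical.decPred _) (Nat.Partition.distincts n))
    (Finset.filter_subset _ _) (by
      intro p hp
      obtain ⟨t, ht, hdev⟩ := (Finset.mem_filter.1 hp).2
      refine ⟨min ⌊t * s⌋₊ n, min_le_right _ _, ?_⟩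
      rw [Sp_min]
      have h1 := mu_L_close hs0 hsn ht
      have h2 : s * (n : ℝ) ^ (-(1 / 4 : ℝ) + δ) ≤ |Sp p ⌊t * s⌋₊ - s * L t| := by
        have e : Sp p ⌊t * s⌋₊ - s * L t =
            s * ((1 / s) * (∑ k ∈ Finset.Icc 1 ⌊t * s⌋₊, (X p k : ℝ)) - L t) := by
          unfold Sp; field_simp
        rw [e, abs_mul, abs_of_pos hs0]
        gcongr
      have h3 := abs_sub_le (Sp p ⌊t * s⌋₊) (mu (1 / (A * s)) (min ⌊t * s⌋₊ n)) (s * L t)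
      rw [abs_sub_comm (mu (1 / (A * s)) (min ⌊t * s⌋₊ n))] at h3
      rw [ha]; linarith)
  refine hcard.trans ?_
  have hexp : 1 / (A * s) * n + 1 / (A ^ 2 * (1 / (A * s))) + θ ^ 2 / (1 / (A * s)) =
      2 / A * s + A := by
    have : θ ^ 2 / (1 / (A * s)) = A * (θ ^ 2 * s) := by field_simp
    rw [this, hθ2, ← hsn]; field_simp; ring
  rw [hexp]
  have hmain : 4 / c * Real.exp (A ^ 2 + 2 + A + (Kexp + 1) * Real.log n - (n : ℝ) ^ δ) *
      (c * Real.exp (2 / A * s - Kexp * Real.log n)) ≤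
      4 / c * Real.exp (A ^ 2 + 2 + A + (Kexp + 1) * Real.log n - (n : ℝ) ^ δ) *
      ((Nat.Partition.distincts n).card : ℝ) := by gcongr
  refine le_trans ?_ hmain
  have e1 : 4 / c * Real.exp (A ^ 2 + 2 + A + (Kexp + 1) * Real.log n - (n : ℝ) ^ δ) *
      (c * Real.exp (2 / A * s - Kexp * Real.log n)) =
      4 * (n * Real.exp (A ^ 2 + 2 + A - (n : ℝ) ^ δ + 2 / A * s)) := by
    calc _ = 4 * (Real.exp (A ^ 2 + 2 + A + (Kexp + 1) * Real.log n - (n : ℝ) ^ δ) *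
          Real.exp (2 / A * s - Kexp * Real.log n)) := by field_simp
      _ = 4 * (Real.exp (Real.log n) * Real.exp (A ^ 2 + 2 + A - (n : ℝ) ^ δ + 2 / A * s)) := by
          rw [← Real.exp_add, ← Real.exp_add]; ring_nf
      _ = _ := by rw [Real.exp_log hn0]
  rw [e1, ← Real.exp_add]
  have e2 : Real.exp (-θ * a + (2 / A * s + A)) ≤
      Real.exp (A ^ 2 + 2 + A - (n : ℝ) ^ δ + 2 / A * s) := Real.exp_le_exp.2 (by linarith)
  calc _ ≤ (n + n : ℝ) * (2 * Real.exp (A ^ 2 + 2 + A - (n : ℝ) ^ δ + 2 / A * s)) := by gcongr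
    _ = _ := by ring

theorem strong_limit_shape (δ : ℝ) (hδ0 : 0 < δ) (hδ : δ < 1 / 4) :
    ∃ c > (0 : ℝ), ∃ N : ℕ, ∀ n ≥ N,
      Pn n (fun lam => ∃ t : ℝ, 0 ≤ t ∧
          |(1 / Real.sqrt n) * (∑ k ∈ Finset.Icc 1 ⌊t * Real.sqrt n⌋₊, (X lam k : ℝ)) - L t|
            > (n : ℝ) ^ (-(1 / 4 : ℝ) + δ))
        ≤ Real.exp (-c * (n : ℝ) ^ δ) := by
  have hK := Kexp_pos
  obtain ⟨c, hc, hlow⟩ := distincts_lower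
  have h1 : ∀ᶠ n : ℕ in atTop, Real.log (n : ℝ) ≤ 1 / (4 * (Kexp + 1)) * (n : ℝ) ^ δ := by
    have := ((isLittleO_log_rpow_atTop hδ0).comp_tendsto tendsto_natCast_atTop_atTop).bound
      (by positivity : 0 < 1 / (4 * (Kexp + 1)))
    filter_upwards [this] with n hn
    have h := (le_abs_self _).trans hn
    simp only [Function.comp, Real.norm_eq_abs] at h
    rwa [abs_of_nonneg (by positivity : (0 : ℝ) ≤ (n : ℝ) ^ δ)] at h
  have h2 : ∀ᶠ n : ℕ in atTop, 4 * (A ^ 2 + 2 + A + Real.log (4 / c)) ≤ (n : ℝ) ^ δ :=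
    ((tendsto_rpow_atTop hδ0).comp tendsto_natCast_atTop_atTop).eventually_ge_atTop _
  obtain ⟨N, hN⟩ := eventually_atTop.1 ((h1.and h2).and (eventually_ge_atTop 1))
  refine ⟨1 / 2, by norm_num, N, fun n hn => ?_⟩
  obtain ⟨⟨h1, h2⟩, h3⟩ := hN n hn
  refine (Pn_le hc n h3 (hlow n h3)).trans ?_
  rw [← Real.exp_log (by positivity : 0 < 4 / c), ← Real.exp_add]
  apply Real.exp_le_exp.2
  have h4 : (Kexp + 1) * Real.log n ≤ (n : ℝ) ^ δ / 4 := by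
    calc _ ≤ (Kexp + 1) * (1 / (4 * (Kexp + 1)) * (n : ℝ) ^ δ) := by gcongr
      _ = _ := by field_simp
  linarith
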